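/- arXiv:1012.1919 — 2 statements merged into one kernel-verified Lean document; each statement's English description precedes it below -/
import Mathlib

section
/- Let A be a real m×n matrix with singular value decomposition A = U Σ Vᵀ, where U is an m×m orthogonal matrix, V is an n×n orthogonal matrix, and Σ is an m×n matrix with Σ_{ij} = 0 for i ≠ j and Σ_{ii} = σ_i ≥ 0. Let Σ_m be the m×m diagonal matrix and Σ_n the n×n diagonal matrix whose i-th diagonal entry equals σ_i when i < min(m,n) and 0 otherwise. Then, setting Y = U Σ_m Uᵀ and Z = V Σ_n Vᵀ, the block matrix [[Y, A],[Aᵀ, Z]] is positive semidefinite and (1/2)(tr Y + tr Z) = Σ_i σ_i. -/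
open Matrix

theorem aux_sum (p : ℕ) (σ : ℕ → ℝ) (hσ : ∀ k, 0 ≤ σ k) (a b : ℕ) :
    ∑ k : Fin p, (if a = (k : ℕ) then √(σ k) else 0) * (if b = (k : ℕ) then √(σ k) else 0)
      = if a = b ∧ a < p then σ a else 0 := by
  rw [Fin.sum_univ_eq_sum_range
    (fun k => (if a = k then √(σ k) else 0) * (if b = k then √(σ k) else 0)) p]
  simp only [ite_mul, zero_mul, Finset.sum_ite_eq, Finset.mem_range]
  by_cases h : a = b
  · subst h
    simp [Real.mul_self_sqrt (hσ a)]
  · have h' : ¬ b = a := fun e => h e.symm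
    simp [h, h']

theorem aux_trace (q p : ℕ) (hpq : p ≤ q) (σ : ℕ → ℝ) (U : Matrix (Fin q) (Fin q) ℝ)
    (hU : Uᵀ * U = 1) :
    (U * (Matrix.diagonal fun i : Fin q => if (i : ℕ) < p then σ (i : ℕ) else 0) * Uᵀ).trace
      = ∑ i ∈ Finset.range p, σ i := by
  rw [Matrix.trace_mul_comm, ← Matrix.mul_assoc, hU, Matrix.one_mul, Matrix.trace_diagonal,
    Fin.sum_univ_eq_sum_range (fun k => if k < p then σ k else 0) q, ← Finset.sum_filter]
  congr 1
  ext k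
  simp only [Finset.mem_filter, Finset.mem_range]
  omega

/-- Given an SVD `A = U * S * Vᵀ` of a real `m × n` matrix (with `U`, `V`
orthogonal and `S` nonnegative "diagonal" with diagonal entries `σ i`), setting
`Y = U Σₘ Uᵀ` and `Z = V Σₙ Vᵀ` — where `Σₘ`, `Σₙ` are square diagonal matrices
carrying the singular values — the block matrix `[[Y, A], [Aᵀ, Z]]` is positive
semidefinite and `(1/2)(tr Y + tr Z)` equals the sum of the singular values. -/
theorem svd_block_posSemidef_and_trace {m n : ℕ}
    (A : Matrix (Fin m) (Fin n) ℝ)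
    (U : Matrix (Fin m) (Fin m) ℝ) (V : Matrix (Fin n) (Fin n) ℝ)
    (S : Matrix (Fin m) (Fin n) ℝ) (σ : ℕ → ℝ)
    (hU : Uᵀ * U = 1) (hV : Vᵀ * V = 1)
    (hA : A = U * S * Vᵀ)
    (hS_off : ∀ (i : Fin m) (j : Fin n), (i : ℕ) ≠ (j : ℕ) → S i j = 0)
    (hS_diag : ∀ (i : Fin m) (j : Fin n), (i : ℕ) = (j : ℕ) → S i j = σ (i : ℕ))
    (hσ : ∀ k, 0 ≤ σ k) :
    let Sm : Matrix (Fin m) (Fin m) ℝ :=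
      Matrix.diagonal fun i => if (i : ℕ) < min m n then σ (i : ℕ) else 0
    let Sn : Matrix (Fin n) (Fin n) ℝ :=
      Matrix.diagonal fun i => if (i : ℕ) < min m n then σ (i : ℕ) else 0
    let Y := U * Sm * Uᵀ
    let Z := V * Sn * Vᵀ
    (Matrix.fromBlocks Y A Aᵀ Z).PosSemidef ∧
      (1 / 2) * (Y.trace + Z.trace) = ∑ i ∈ Finset.range (min m n), σ i := by
  intro Sm Sn Y Z
  constructor
  · let R : Matrix (Fin m ⊕ Fin n) (Fin (min m n)) ℝ := fun x k =>
      if Sum.elim (fun i : Fin m => (i : ℕ)) (fun j : Fin n => (j : ℕ)) x = (k : ℕ)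
        then √(σ k) else 0
    have hR : Matrix.fromBlocks Sm S Sᵀ Sn = R * Rᴴ := by
      ext x y
      rcases x with i | i <;> rcases y with j | j <;>
        refine Eq.trans ?_ (aux_sum (min m n) σ hσ (i : ℕ) (j : ℕ)).symm
      · simp only [Matrix.fromBlocks_apply₁₁, Sm, Matrix.diagonal_apply, Fin.ext_iff,
          ite_and]
      · simp only [Matrix.fromBlocks_apply₁₂]
        by_cases h : (i : ℕ) = j
        · rw [hS_diag i j h, if_pos ⟨h, by omega⟩]
        · rw [hS_off i j h, if_neg (fun e => h e.1)]
      · simp only [Matrix.fromBlocks_apply₂₁, Matrix.transpose_apply]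
        by_cases h : (i : ℕ) = j
        · rw [hS_diag j i h.symm, if_pos ⟨h, by omega⟩, h]
        · rw [hS_off j i (Ne.symm h), if_neg (fun e => h e.1)]
      · simp only [Matrix.fromBlocks_apply₂₂, Sn, Matrix.diagonal_apply, Fin.ext_iff,
          ite_and]
    have hB : Matrix.fromBlocks Y A Aᵀ Z =
        Matrix.fromBlocks U 0 0 V * Matrix.fromBlocks Sm S Sᵀ Sn *
          (Matrix.fromBlocks U 0 0 V)ᴴ := by
      simp [Matrix.fromBlocks_transpose, Matrix.fromBlocks_multiply, hA, Y, Z,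
        Matrix.transpose_mul, Matrix.mul_assoc, Matrix.conjTranspose_eq_transpose_of_trivial]
    rw [hB, hR]
    exact (Matrix.posSemidef_self_mul_conjTranspose R).mul_mul_conjTranspose_same _
  · have h1 : Y.trace = _ := aux_trace m (min m n) (min_le_left _ _) σ U hU
    have h2 : Z.trace = _ := aux_trace n (min m n) (min_le_right _ _) σ V hV
    rw [h1, h2]
    ring
end

section
/- (Successive iterates converge together.) Let d ≥ 1, let M : ℝ^d → ℝ^d and H : ℝ^d → ℝ be continuous maps such that H(M(x)) ≤ H(x) for every x ∈ ℝ^d, and H(M(x)) < H(x) whenever M(x) ≠ x. Let x_0 ∈ ℝ^d and define x_{t+1} = M(x_t) for all t ∈ ℕ. If the sequence (x_t) is bounded, then ‖x_{t+1} − x_t‖ → 0 as t → ∞. -/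
/-- Successive iterates of a continuous descent map converge together: if
`M : ℝᵈ → ℝᵈ` and `H : ℝᵈ → ℝ` are continuous, `H (M x) ≤ H x` everywhere with
strict inequality whenever `M x ≠ x`, and the orbit `x_{t+1} = M (x_t)` is
bounded, then `‖x_{t+1} - x_t‖ → 0`. -/
theorem mm_successive_iterates_tendsto_zero {d : ℕ} (hd : 1 ≤ d)
    (M : EuclideanSpace ℝ (Fin d) → EuclideanSpace ℝ (Fin d))
    (H : EuclideanSpace ℝ (Fin d) → ℝ)
    (hM : Continuous M) (hH : Continuous H)
    (hdec : ∀ x, H (M x) ≤ H x)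
    (hstrict : ∀ x, M x ≠ x → H (M x) < H x)
    (x : ℕ → EuclideanSpace ℝ (Fin d)) (x₀ : EuclideanSpace ℝ (Fin d))
    (hx0 : x 0 = x₀)
    (hrec : ∀ t : ℕ, x (t + 1) = M (x t))
    (hbdd : ∃ C : ℝ, ∀ t : ℕ, ‖x t‖ ≤ C) :
    Filter.Tendsto (fun t : ℕ => ‖x (t + 1) - x t‖) Filter.atTop (nhds 0) := by
  obtain ⟨C, hC⟩ := hbdd
  have hcomp : IsCompact (Metric.closedBall (0 : EuclideanSpace ℝ (Fin d)) C) :=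
    isCompact_closedBall _ _
  have hmem : ∀ t, x t ∈ Metric.closedBall (0 : EuclideanSpace ℝ (Fin d)) C := by
    intro t
    simpa using hC t
  have hanti : Antitone (fun t => H (x t)) := by
    apply antitone_nat_of_succ_le
    intro t
    rw [hrec]
    exact hdec _
  have hbb : BddBelow (Set.range (fun t => H (x t))) := by
    refine (hcomp.bddBelow_image hH.continuousOn).mono ?_
    rintro _ ⟨t, rfl⟩
    exact ⟨x t, hmem t, rfl⟩
  have hlim := tendsto_atTop_ciInf hanti hbb
  apply Filter.tendsto_of_subseq_tendsto
  intro ns hns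
  obtain ⟨a, -, φ, hφ, ha⟩ := hcomp.tendsto_subseq (fun n => hmem (ns n))
  refine ⟨φ, ?_⟩
  have hk : Filter.Tendsto (fun n => ns (φ n)) Filter.atTop Filter.atTop :=
    hns.comp hφ.tendsto_atTop
  have ha' : Filter.Tendsto (fun n => x (ns (φ n))) Filter.atTop (nhds a) := ha
  have h1 : Filter.Tendsto (fun n => x (ns (φ n) + 1)) Filter.atTop (nhds (M a)) := by
    simp only [hrec]
    exact (hM.tendsto a).comp ha'
  have e1 := tendsto_nhds_unique ((hH.tendsto a).comp ha') (hlim.comp hk)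
  have e2 := tendsto_nhds_unique ((hH.tendsto (M a)).comp h1)
    (hlim.comp ((Filter.tendsto_add_atTop_nat 1).comp hk))
  have hfix : M a = a := by
    by_contra hne
    have := hstrict a hne
    linarith
  have := (h1.sub ha').norm
  simpa [hfix] using this
end
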